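/- arXiv:1906.05568 — 2 statements merged into one kernel-verified Lean document; each statement's English description precedes it below -/
import Mathlib

section
/- Let p ∈ (0,1/2], ρ ∈ (0,1) and ε > 0. Let r = log(2/ε)/log(1/ρ) and δ = 10^{−3r−1}·ε³. Suppose f : {0,1}^n → {0,1} is an (r,δ)-global Boolean function with μ_p(f) < δ. Then Stab_ρ(f) ≤ ε·μ_p(f). -/
/-!
Degrees above `r` contribute at most `ρ ^ r * μ_p(f) = (ε / 2) * μ_p(f)` to the noise stability, so
it is enough to bound the `L²` weight `‖g‖₂²` of the truncation `g = f^{≤ d}`, `d = ⌊r⌋`. Since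
`‖g‖₂² = ⟨f, g⟩`, Hölder's inequality gives `‖g‖₂⁸ ≤ μ_p(f)³ ‖g‖₄⁴`. Ordinary hypercontractivity is
too weak here because `‖χ_i‖₄` blows up as `p → 0`, but an induction on the coordinates shows
`‖T_{1/2} h‖₄⁴ ≤ ∑_S (3σ²/16)^{|S|} I_S(h)²`. For `h = T_2 g` this becomes `‖g‖₄⁴ ≤ 19^d γ ‖g‖₂²`
whenever all generalised influences `I_S(f)` with `|S| ≤ d` are at most `γ`. Finally, `I_S(f)` is at
most the second moment of the iterated discrete derivative of `f` along `S`, which globalness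
bounds by `8^d δ`. Altogether `‖g‖₂⁶ ≤ 152^d δ μ_p(f)³ ≤ (ε / 2)³ μ_p(f)³`.
-/

open Finset

namespace GlobalHC

variable {n : ℕ}

/-- Expectation with respect to the `p`-biased measure on `{0,1}^n`. -/
noncomputable def Ep (p : ℝ) (f : (Fin n → Bool) → ℝ) : ℝ :=
  ∑ x : Fin n → Bool, (∏ i, if x i then p else 1 - p) * f x

/-- The `r`-norm with respect to the `p`-biased measure. -/
noncomputable def pnorm (p r : ℝ) (f : (Fin n → Bool) → ℝ) : ℝ :=
  (Ep p fun x => |f x| ^ r) ^ (1 / r)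

/-- The `p`-biased character `χ_S`. -/
noncomputable def chi (p : ℝ) (S : Finset (Fin n)) (x : Fin n → Bool) : ℝ :=
  ∏ i ∈ S, ((if x i then (1 : ℝ) else 0) - p) / Real.sqrt (p * (1 - p))

/-- The `p`-biased Fourier coefficient `f̂(S)`. -/
noncomputable def coeff (p : ℝ) (f : (Fin n → Bool) → ℝ) (S : Finset (Fin n)) : ℝ :=
  Ep p fun x => f x * chi p S x

/-- The derivative `D_S f = Σ_{T ⊇ S} f̂(T) χ_{T∖S}`. -/
noncomputable def derivS (p : ℝ) (S : Finset (Fin n)) (f : (Fin n → Bool) → ℝ) :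
    (Fin n → Bool) → ℝ :=
  fun x => ∑ T ∈ Finset.univ.filter (fun T => S ⊆ T), coeff p f T * chi p (T \ S) x

/-- The generalised influence `I_S(f) = σ^{-2|S|} Σ_{T ⊇ S} f̂(T)²`. -/
noncomputable def genInf (p : ℝ) (S : Finset (Fin n)) (f : (Fin n → Bool) → ℝ) : ℝ :=
  (∑ T ∈ Finset.univ.filter (fun T => S ⊆ T), coeff p f T ^ 2) / (p * (1 - p)) ^ S.card

/-- The noise operator `T_ρ f = Σ_S ρ^{|S|} f̂(S) χ_S`. -/
noncomputable def noise (p ρ : ℝ) (f : (Fin n → Bool) → ℝ) : (Fin n → Bool) → ℝ :=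
  fun x => ∑ S : Finset (Fin n), ρ ^ S.card * coeff p f S * chi p S x

/-- The degree-`r` truncation `f^{≤ r}`. -/
noncomputable def trunc (p : ℝ) (r : ℕ) (f : (Fin n → Bool) → ℝ) : (Fin n → Bool) → ℝ :=
  fun x => ∑ S ∈ Finset.univ.filter (fun S : Finset (Fin n) => S.card ≤ r),
    coeff p f S * chi p S x

/-- The restriction `f_{J→1}` setting all coordinates in `J` to `1`. -/
def restrict1 (J : Finset (Fin n)) (f : (Fin n → Bool) → ℝ) : (Fin n → Bool) → ℝ :=
  fun x => f (fun i => if i ∈ J then true else x i)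

/-- `f` is `(r,δ)`-global (for the `p`-biased measure). -/
def IsGlobal (p r δ : ℝ) (f : (Fin n → Bool) → ℝ) : Prop :=
  ∀ J : Finset (Fin n), (J.card : ℝ) ≤ r → Ep p (restrict1 J f) ≤ Ep p f + δ

/-- The total influence `I[f] = Σ_i Pr_{μ_p}[f(x ⊕ e_i) ≠ f(x)]`. -/
noncomputable def totalInf (p : ℝ) (f : (Fin n → Bool) → ℝ) : ℝ :=
  ∑ i : Fin n, Ep p fun x => if f (Function.update x i (!x i)) = f x then 0 else 1

/-- Noise stability `Stab_ρ(f) = Σ_S ρ^{|S|} f̂(S)²` (w.r.t. `μ_p`). -/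
noncomputable def stab (p ρ : ℝ) (f : (Fin n → Bool) → ℝ) : ℝ :=
  ∑ S : Finset (Fin n), ρ ^ S.card * coeff p f S ^ 2

/-- `f` is monotone. -/
def Mono (f : (Fin n → Bool) → ℝ) : Prop :=
  ∀ x y : Fin n → Bool, (∀ i, x i ≤ y i) → f x ≤ f y

section IntervalSums

variable {α : Type*} [DecidableEq α] {i : α} {S U : Finset α}

lemma sum_Icc_insert_right {M : Type*} [AddCommMonoid M] (hU : i ∉ U) (hS : i ∉ S)
    (g : Finset α → M) :
    ∑ T ∈ Icc S (insert i U), g T = ∑ T ∈ Icc S U, g T + ∑ T ∈ Icc S U, g (insert i T) := by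
  simp only [Icc_eq_filter_powerset, sum_filter, sum_powerset_insert hU,
    subset_insert_iff_of_notMem hS]

lemma sum_Icc_insert_insert {M : Type*} [AddCommMonoid M] (hU : i ∉ U) (hS : i ∉ S)
    (g : Finset α → M) :
    ∑ T ∈ Icc (insert i S) (insert i U), g T = ∑ T ∈ Icc S U, g (insert i T) := by
  have hzero : ∑ T ∈ U.powerset, (if insert i S ⊆ T then g T else 0) = 0 :=
    sum_eq_zero fun T hT => if_neg fun h => hU (mem_powerset.1 hT (h (mem_insert_self i S)))
  simp only [Icc_eq_filter_powerset, sum_filter, sum_powerset_insert hU, hzero, zero_add,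
    insert_subset_insert_iff hS]

lemma sum_pow_card_mul_sum_Icc_univ {R : Type*} [CommSemiring R] [Fintype α] (a : R)
    (w : Finset α → R) :
    ∑ S, a ^ #S * ∑ T ∈ Icc S univ, w T = ∑ T, (a + 1) ^ #T * w T := by
  have hbinom (T : Finset α) : ∑ S ∈ T.powerset, a ^ #S = (a + 1) ^ #T := by
    simpa using sum_pow_mul_eq_add_pow a 1 T
  simp only [← hbinom, mul_sum, sum_mul]
  exact sum_comm' fun S T => by simp

end IntervalSums

section Expectation

variable {p : ℝ}

lemma prod_bias_nonneg (hp0 : 0 ≤ p) (hp1 : p ≤ 1) (x : Fin n → Bool) :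
    0 ≤ ∏ i, if x i then p else 1 - p :=
  prod_nonneg fun i _ => by split_ifs <;> linarith

lemma Ep_mono (hp0 : 0 ≤ p) (hp1 : p ≤ 1) {f g : (Fin n → Bool) → ℝ} (h : ∀ x, f x ≤ g x) :
    Ep p f ≤ Ep p g :=
  sum_le_sum fun x _ => mul_le_mul_of_nonneg_left (h x) (prod_bias_nonneg hp0 hp1 x)

lemma Ep_nonneg (hp0 : 0 ≤ p) (hp1 : p ≤ 1) {f : (Fin n → Bool) → ℝ} (h : ∀ x, 0 ≤ f x) :
    0 ≤ Ep p f :=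
  sum_nonneg fun x _ => mul_nonneg (prod_bias_nonneg hp0 hp1 x) (h x)

lemma Ep_add (f g : (Fin n → Bool) → ℝ) : (Ep p fun x => f x + g x) = Ep p f + Ep p g := by
  simp only [Ep, mul_add, sum_add_distrib]

lemma Ep_const_mul (a : ℝ) (f : (Fin n → Bool) → ℝ) : (Ep p fun x => a * f x) = a * Ep p f := by
  simp only [Ep, mul_sum, mul_left_comm]

lemma Ep_sum {ι : Type*} (s : Finset ι) (f : ι → (Fin n → Bool) → ℝ) :
    (Ep p fun x => ∑ j ∈ s, f j x) = ∑ j ∈ s, Ep p (f j) := by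
  simp only [Ep, mul_sum]
  exact sum_comm

lemma Ep_prod (φ : Fin n → Bool → ℝ) :
    (Ep p fun x => ∏ i, φ i (x i)) = ∏ i, (p * φ i true + (1 - p) * φ i false) := by
  have h := prod_univ_sum (fun _ : Fin n => (univ : Finset Bool))
    fun i b => (if b then p else 1 - p) * φ i b
  simp only [Fintype.piFinset_univ, Fintype.sum_bool, if_true, Bool.false_eq_true, if_false,
    prod_mul_distrib] at h
  exact h.symm

lemma Ep_const (a : ℝ) : (Ep p fun _ : Fin n → Bool => a) = a := by
  have hone : (Ep p fun _ : Fin n → Bool => 1) = 1 := by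
    simpa using Ep_prod (n := n) (p := p) fun _ _ => 1
  simpa only [mul_one, hone] using Ep_const_mul (n := n) (p := p) a fun _ => 1

lemma prod_bias_update_mul (i : Fin n) (x : Fin n → Bool) (b : Bool) :
    (∏ j, if Function.update x i b j then p else 1 - p) * (if x i then p else 1 - p) =
      (∏ j, if x j then p else 1 - p) * (if b then p else 1 - p) := by
  have hrest : ∏ j ∈ univ.erase i, (if Function.update x i b j then p else 1 - p) =
      ∏ j ∈ univ.erase i, if x j then p else 1 - p :=
    prod_congr rfl fun j hj => by rw [Function.update_of_ne (ne_of_mem_erase hj)]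
  rw [← mul_prod_erase univ _ (mem_univ i), ← mul_prod_erase univ (fun j => ite _ _ _)
    (mem_univ i), hrest, Function.update_self]
  ring

lemma Ep_eq_Ep_resample (i : Fin n) (f : (Fin n → Bool) → ℝ) :
    Ep p f = Ep p fun x =>
      p * f (Function.update x i true) + (1 - p) * f (Function.update x i false) := by
  let w (x : Fin n → Bool) : ℝ := ∏ j, if x j then p else 1 - p
  let q (b : Bool) : ℝ := if b then p else 1 - p
  have hinv : Function.Involutive fun y : (Fin n → Bool) × Bool =>
      (Function.update y.1 i y.2, y.1 i) := fun y => by simp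
  calc ∑ x, w x * f x
      = ∑ y : (Fin n → Bool) × Bool, w y.1 * q y.2 * f y.1 := by
        rw [Fintype.sum_prod_type]
        refine sum_congr rfl fun x _ => ?_
        simp only [Fintype.sum_bool, q, if_true, Bool.false_eq_true, if_false]
        ring
    _ = ∑ y : (Fin n → Bool) × Bool,
          w (Function.update y.1 i y.2) * q (y.1 i) * f (Function.update y.1 i y.2) :=
        (Equiv.sum_comp hinv.toPerm fun y => w y.1 * q y.2 * f y.1).symm
    _ = ∑ y : (Fin n → Bool) × Bool, w y.1 * q y.2 * f (Function.update y.1 i y.2) :=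
        sum_congr rfl fun y _ => by rw [prod_bias_update_mul i y.1 y.2]
    _ = _ := by
        rw [Fintype.sum_prod_type]
        refine sum_congr rfl fun x _ => ?_
        simp only [Fintype.sum_bool, q, if_true, Bool.false_eq_true, if_false, w]
        ring

lemma sq_Ep_le_Ep_mul_Ep (hp0 : 0 ≤ p) (hp1 : p ≤ 1) {f g h : (Fin n → Bool) → ℝ}
    (hg : ∀ x, 0 ≤ g x) (hh : ∀ x, 0 ≤ h x) (hf : ∀ x, f x ^ 2 ≤ g x * h x) :
    Ep p f ^ 2 ≤ Ep p g * Ep p h := by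
  have hw := prod_bias_nonneg (n := n) hp0 hp1
  refine sum_sq_le_sum_mul_sum_of_sq_le_mul univ (fun x _ => mul_nonneg (hw x) (hg x))
    (fun x _ => mul_nonneg (hw x) (hh x)) fun x _ => ?_
  rw [mul_pow, mul_mul_mul_comm, ← pow_two]
  exact mul_le_mul_of_nonneg_left (hf x) (sq_nonneg _)

lemma Ep_mul_pow_four_le (hp0 : 0 ≤ p) (hp1 : p ≤ 1) {f : (Fin n → Bool) → ℝ}
    (hf : ∀ x, f x ∈ Set.Icc 0 1) (g : (Fin n → Bool) → ℝ) :
    (Ep p fun x => f x * g x) ^ 4 ≤ Ep p f ^ 3 * Ep p fun x => g x ^ 4 := by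
  have : 0 ≤ Ep p f := Ep_nonneg hp0 hp1 fun x => (hf x).1
  have hfg : (Ep p fun x => f x * g x) ^ 2 ≤ Ep p f * Ep p fun x => f x * g x ^ 2 :=
    sq_Ep_le_Ep_mul_Ep hp0 hp1 (fun x => (hf x).1)
      (fun x => mul_nonneg (hf x).1 (sq_nonneg _)) fun x => le_of_eq (by ring)
  have hfg2 : (Ep p fun x => f x * g x ^ 2) ^ 2 ≤ Ep p f * Ep p fun x => g x ^ 4 := by
    refine sq_Ep_le_Ep_mul_Ep hp0 hp1 (fun x => (hf x).1) (fun x => by positivity) fun x => ?_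
    calc (f x * g x ^ 2) ^ 2 = f x ^ 2 * g x ^ 4 := by ring
      _ ≤ f x * g x ^ 4 := by
        gcongr
        exact pow_le_of_le_one (hf x).1 (hf x).2 two_ne_zero
  calc (Ep p fun x => f x * g x) ^ 4 = ((Ep p fun x => f x * g x) ^ 2) ^ 2 := by ring
    _ ≤ (Ep p f * Ep p fun x => f x * g x ^ 2) ^ 2 := by gcongr
    _ = Ep p f ^ 2 * (Ep p fun x => f x * g x ^ 2) ^ 2 := by ring
    _ ≤ Ep p f ^ 2 * (Ep p f * Ep p fun x => g x ^ 4) := by gcongr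
    _ = _ := by ring

lemma Ep_sq_le_Ep (hp0 : 0 ≤ p) (hp1 : p ≤ 1) {f : (Fin n → Bool) → ℝ}
    (hf : ∀ x, f x ∈ Set.Icc 0 1) : (Ep p fun x => f x ^ 2) ≤ Ep p f :=
  Ep_mono hp0 hp1 fun x => pow_le_of_le_one (hf x).1 (hf x).2 two_ne_zero

end Expectation

section Character

variable {p : ℝ}

/-- The value at `b` of the character `χ_i` of a single coordinate, so that
`chi p S x = ∏ i ∈ S, chiOne p (x i)` holds by definition. -/
noncomputable def chiOne (p : ℝ) (b : Bool) : ℝ :=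
  ((if b then (1 : ℝ) else 0) - p) / √(p * (1 - p))

lemma chiOne_mean (p : ℝ) : p * chiOne p true + (1 - p) * chiOne p false = 0 := by
  simp only [chiOne, if_true, Bool.false_eq_true, if_false]
  ring

lemma chiOne_second_moment (hp0 : 0 < p) (hp1 : p < 1) :
    p * chiOne p true ^ 2 + (1 - p) * chiOne p false ^ 2 = 1 := by
  have hσ : 0 < p * (1 - p) := mul_pos hp0 (sub_pos.2 hp1)
  have h1p : 1 - p ≠ 0 := (sub_pos.2 hp1).ne'
  simp only [chiOne, if_true, Bool.false_eq_true, if_false, div_pow, Real.sq_sqrt hσ.le]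
  field_simp
  ring

lemma chiOne_third_moment (hp0 : 0 < p) (hp1 : p < 1) :
    p * chiOne p true ^ 3 + (1 - p) * chiOne p false ^ 3 = (1 - 2 * p) / √(p * (1 - p)) := by
  have hσ : 0 < p * (1 - p) := mul_pos hp0 (sub_pos.2 hp1)
  have hsqrt : √(p * (1 - p)) ^ 2 = p * (1 - p) := Real.sq_sqrt hσ.le
  have hsqrt0 : √(p * (1 - p)) ≠ 0 := (Real.sqrt_pos.2 hσ).ne'
  simp only [chiOne, if_true, Bool.false_eq_true, if_false]
  field_simp
  rw [hsqrt]
  ring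

lemma chiOne_fourth_moment (hp0 : 0 < p) (hp1 : p < 1) :
    p * chiOne p true ^ 4 + (1 - p) * chiOne p false ^ 4 = 1 / (p * (1 - p)) - 3 := by
  have hσ : 0 < p * (1 - p) := mul_pos hp0 (sub_pos.2 hp1)
  have hsqrt : √(p * (1 - p)) ^ 4 = (p * (1 - p)) ^ 2 := by
    rw [show 4 = 2 * 2 from rfl, pow_mul, Real.sq_sqrt hσ.le]
  have h1p : 1 - p ≠ 0 := (sub_pos.2 hp1).ne'
  simp only [chiOne, if_true, Bool.false_eq_true, if_false, div_pow, hsqrt]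
  field_simp
  ring

lemma chi_insert {i : Fin n} {S : Finset (Fin n)} (hi : i ∉ S) (x : Fin n → Bool) :
    chi p (insert i S) x = chiOne p (x i) * chi p S x :=
  prod_insert hi

lemma chi_update {i : Fin n} {S : Finset (Fin n)} (hi : i ∉ S) (x : Fin n → Bool) (b : Bool) :
    chi p S (Function.update x i b) = chi p S x :=
  prod_congr rfl fun j hj => by rw [Function.update_of_ne (ne_of_mem_of_not_mem hj hi)]

lemma coeff_chi (hp0 : 0 < p) (hp1 : p < 1) (S T : Finset (Fin n)) :
    coeff p (chi p S) T = if S = T then 1 else 0 := by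
  let φ (i : Fin n) (b : Bool) : ℝ :=
    (if i ∈ S then chiOne p b else 1) * if i ∈ T then chiOne p b else 1
  have hφ : coeff p (chi p S) T = ∏ i, (p * φ i true + (1 - p) * φ i false) := by
    rw [← Ep_prod, coeff]
    congr! with x
    simp only [φ, prod_mul_distrib, prod_ite_mem, univ_inter]
    rfl
  have hfactor (i : Fin n) :
      p * φ i true + (1 - p) * φ i false = if i ∈ S ↔ i ∈ T then 1 else 0 := by
    by_cases hS : i ∈ S <;> by_cases hT : i ∈ T <;>
      simp [φ, hS, hT, chiOne_mean, ← pow_two, chiOne_second_moment hp0 hp1]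
  rw [hφ, prod_congr rfl fun i _ => hfactor i, prod_ite_zero]
  simp [Finset.ext_iff]

lemma Ep_mul_sum_chi (f : (Fin n → Bool) → ℝ) (A : Finset (Finset (Fin n)))
    (c : Finset (Fin n) → ℝ) :
    (Ep p fun x => f x * ∑ T ∈ A, c T * chi p T x) = ∑ T ∈ A, c T * coeff p f T := by
  simp only [mul_sum, Ep_sum, coeff, ← Ep_const_mul, mul_left_comm]

lemma coeff_sum_chi (hp0 : 0 < p) (hp1 : p < 1) (A : Finset (Finset (Fin n)))
    (c : Finset (Fin n) → ℝ) (S : Finset (Fin n)) :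
    coeff p (fun x => ∑ T ∈ A, c T * chi p T x) S = if S ∈ A then c S else 0 := by
  have h := Ep_mul_sum_chi (p := p) (chi p S) A c
  simp only [coeff_chi hp0 hp1, mul_ite, mul_one, mul_zero, sum_ite_eq] at h
  simpa only [coeff, mul_comm] using h

lemma Ep_sum_chi_sq (hp0 : 0 < p) (hp1 : p < 1) (A : Finset (Finset (Fin n)))
    (c : Finset (Fin n) → ℝ) :
    (Ep p fun x => (∑ T ∈ A, c T * chi p T x) ^ 2) = ∑ T ∈ A, c T ^ 2 := by
  simp only [pow_two]
  rw [Ep_mul_sum_chi]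
  exact sum_congr rfl fun T hT => by rw [coeff_sum_chi hp0 hp1, if_pos hT]

lemma sum_coeff_sq_le (hp0 : 0 < p) (hp1 : p < 1) (f : (Fin n → Bool) → ℝ) :
    ∑ T, coeff p f T ^ 2 ≤ Ep p fun x => f x ^ 2 := by
  let P (x : Fin n → Bool) : ℝ := ∑ T, coeff p f T * chi p T x
  have hexpand (x : Fin n → Bool) :
      (f x - P x) ^ 2 = f x ^ 2 + ((-2) * (f x * P x) + P x ^ 2) := by ring
  have hdist : 0 ≤ Ep p fun x => (f x - P x) ^ 2 :=
    Ep_nonneg hp0.le hp1.le fun x => sq_nonneg _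
  simp only [hexpand, Ep_add, Ep_const_mul] at hdist
  rw [Ep_mul_sum_chi, Ep_sum_chi_sq hp0 hp1] at hdist
  simp only [← pow_two] at hdist
  linarith

end Character

section NoiseTrunc

variable {p : ℝ}

lemma coeff_noise (hp0 : 0 < p) (hp1 : p < 1) (ρ : ℝ) (f : (Fin n → Bool) → ℝ)
    (S : Finset (Fin n)) : coeff p (noise p ρ f) S = ρ ^ #S * coeff p f S :=
  (coeff_sum_chi hp0 hp1 univ (fun T => ρ ^ #T * coeff p f T) S).trans (if_pos (mem_univ S))

lemma coeff_trunc (hp0 : 0 < p) (hp1 : p < 1) (d : ℕ) (f : (Fin n → Bool) → ℝ)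
    (S : Finset (Fin n)) : coeff p (trunc p d f) S = if #S ≤ d then coeff p f S else 0 :=
  (coeff_sum_chi hp0 hp1 {T | #T ≤ d} (coeff p f) S).trans (by simp)

lemma noise_inv_noise_trunc (hp0 : 0 < p) (hp1 : p < 1) {ρ : ℝ} (hρ : ρ ≠ 0) (d : ℕ)
    (f : (Fin n → Bool) → ℝ) : noise p ρ⁻¹ (noise p ρ (trunc p d f)) = trunc p d f := by
  funext x
  have hcancel (k : ℕ) : ρ⁻¹ ^ k * ρ ^ k = 1 := by rw [← mul_pow, inv_mul_cancel₀ hρ, one_pow]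
  simp only [noise, ← mul_assoc, coeff_noise hp0 hp1, coeff_trunc hp0 hp1, hcancel, one_mul]
  simp only [trunc, sum_filter, ite_mul, zero_mul]

lemma Ep_trunc_sq (hp0 : 0 < p) (hp1 : p < 1) (d : ℕ) (f : (Fin n → Bool) → ℝ) :
    (Ep p fun x => trunc p d f x ^ 2) = ∑ T : Finset (Fin n) with #T ≤ d, coeff p f T ^ 2 :=
  Ep_sum_chi_sq hp0 hp1 _ _

lemma Ep_mul_trunc (hp0 : 0 < p) (hp1 : p < 1) (d : ℕ) (f : (Fin n → Bool) → ℝ) :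
    (Ep p fun x => f x * trunc p d f x) = Ep p fun x => trunc p d f x ^ 2 := by
  rw [Ep_trunc_sq hp0 hp1]
  exact (Ep_mul_sum_chi f _ _).trans (by simp only [pow_two])

end NoiseTrunc

section Influence

variable {p : ℝ}

lemma genInf_eq (p : ℝ) (S : Finset (Fin n)) (f : (Fin n → Bool) → ℝ) :
    genInf p S f = (∑ T ∈ Icc S univ, coeff p f T ^ 2) / (p * (1 - p)) ^ #S := by
  rw [genInf, Icc_eq_filter_powerset, powerset_univ]

lemma genInf_nonneg (hp0 : 0 ≤ p) (hp1 : p ≤ 1) (S : Finset (Fin n)) (f : (Fin n → Bool) → ℝ) :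
    0 ≤ genInf p S f := by
  have : 0 ≤ 1 - p := sub_nonneg.2 hp1
  unfold genInf
  positivity

lemma genInf_trunc_le (hp0 : 0 < p) (hp1 : p < 1) (d : ℕ) (S : Finset (Fin n))
    (f : (Fin n → Bool) → ℝ) : genInf p S (trunc p d f) ≤ genInf p S f := by
  have hσ : 0 ≤ p * (1 - p) := mul_nonneg hp0.le (sub_nonneg.2 hp1.le)
  refine div_le_div_of_nonneg_right (sum_le_sum fun T _ => ?_) (pow_nonneg hσ _)
  rw [coeff_trunc hp0 hp1]
  split_ifs
  · exact le_rfl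
  · simp [sq_nonneg]

lemma genInf_trunc_of_lt (hp0 : 0 < p) (hp1 : p < 1) {d : ℕ} {S : Finset (Fin n)} (hS : d < #S)
    (f : (Fin n → Bool) → ℝ) : genInf p S (trunc p d f) = 0 := by
  have hcoeff (T : Finset (Fin n)) (hT : S ⊆ T) : coeff p (trunc p d f) T = 0 := by
    rw [coeff_trunc hp0 hp1, if_neg (hS.trans_le (card_le_card hT)).not_ge]
  rw [genInf, sum_eq_zero fun T hT => by rw [hcoeff T (mem_filter.1 hT).2, sq, zero_mul],
    zero_div]

lemma pow_card_mul_coeff_trunc_sq_le (hp0 : 0 < p) (hp1 : p < 1) {a : ℝ} (ha : 1 ≤ a) (d : ℕ)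
    (f : (Fin n → Bool) → ℝ) (T : Finset (Fin n)) :
    a ^ #T * coeff p (trunc p d f) T ^ 2 ≤ a ^ d * coeff p (trunc p d f) T ^ 2 := by
  rw [coeff_trunc hp0 hp1]
  split_ifs with hT
  · gcongr
  · simp

lemma genInf_noise_trunc_le (hp0 : 0 < p) (hp1 : p < 1) {ρ : ℝ} (hρ : 1 ≤ ρ ^ 2) (d : ℕ)
    (S : Finset (Fin n)) (f : (Fin n → Bool) → ℝ) :
    genInf p S (noise p ρ (trunc p d f)) ≤ (ρ ^ 2) ^ d * genInf p S (trunc p d f) := by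
  have : 0 ≤ 1 - p := sub_nonneg.2 hp1.le
  rw [genInf, genInf, ← mul_div_assoc, mul_sum]
  gcongr with T
  rw [coeff_noise hp0 hp1, mul_pow, pow_right_comm]
  exact pow_card_mul_coeff_trunc_sq_le hp0 hp1 hρ d f T

lemma sum_pow_card_mul_genInf (hp0 : 0 < p) (hp1 : p < 1) (a : ℝ) (f : (Fin n → Bool) → ℝ) :
    ∑ S, (a * (p * (1 - p))) ^ #S * genInf p S f = ∑ T, (a + 1) ^ #T * coeff p f T ^ 2 := by
  have hσ : p * (1 - p) ≠ 0 := (mul_pos hp0 (sub_pos.2 hp1)).ne'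
  rw [← sum_pow_card_mul_sum_Icc_univ]
  refine sum_congr rfl fun S _ => ?_
  rw [genInf_eq, mul_pow, mul_assoc, mul_div_cancel₀ _ (pow_ne_zero _ hσ)]

end Influence

section Hypercontractivity

variable {p : ℝ}

-- With `m = E[χ³]` one has `E[χ⁴] = m² + 1`, and AM-GM on each cross term gives the bound.
lemma two_point_le {p u v m : ℝ} (h1 : p * u + (1 - p) * v = 0)
    (h2 : p * u ^ 2 + (1 - p) * v ^ 2 = 1) (h3 : p * u ^ 3 + (1 - p) * v ^ 3 = m)
    (h4 : p * u ^ 4 + (1 - p) * v ^ 4 = m ^ 2 + 1) (a b e h : ℝ) :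
    p * ((a + u * b) ^ 2 * (e + u * h) ^ 2) + (1 - p) * ((a + v * b) ^ 2 * (e + v * h) ^ 2) ≤
      a ^ 2 * e ^ 2 + 4 * (a ^ 2 * h ^ 2) + 4 * (b ^ 2 * e ^ 2) +
        3 * (m ^ 2 + 4) * (b ^ 2 * h ^ 2) := by
  have hexpand : p * ((a + u * b) ^ 2 * (e + u * h) ^ 2) +
      (1 - p) * ((a + v * b) ^ 2 * (e + v * h) ^ 2) =
      a ^ 2 * e ^ 2 + (a ^ 2 * h ^ 2 + b ^ 2 * e ^ 2 + 4 * (a * h) * (b * e)) +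
        2 * (m * (b * h)) * (a * h) + 2 * (m * (b * h)) * (b * e) +
        (m ^ 2 + 1) * (b ^ 2 * h ^ 2) := by
    linear_combination (2 * a ^ 2 * e * h + 2 * a * b * e ^ 2) * h1 +
      (a ^ 2 * h ^ 2 + b ^ 2 * e ^ 2 + 4 * (a * h) * (b * e)) * h2 +
      (2 * a * b * h ^ 2 + 2 * b ^ 2 * e * h) * h3 + b ^ 2 * h ^ 2 * h4
  rw [hexpand]
  linarith [two_mul_le_add_sq (m * (b * h)) (a * h), two_mul_le_add_sq (m * (b * h)) (b * e),
    two_mul_le_add_sq (a * h) (b * e), sq_nonneg (b * h), mul_pow m (b * h) 2, mul_pow b h 2,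
    mul_pow a h 2, mul_pow b e 2]

/-- The noisy multilinear polynomial `∑_{T ⊆ U} ρ^{|T|} c(T) χ_T`, which is `T_ρ f` when `U` is
everything and `c = f̂`. The coefficients are an arbitrary family, and `U` is a parameter, so that
one can argue by induction on `U`. -/
noncomputable def noisePoly (p ρ : ℝ) (U : Finset (Fin n)) (c : Finset (Fin n) → ℝ)
    (x : Fin n → Bool) : ℝ :=
  ∑ T ∈ U.powerset, ρ ^ #T * c T * chi p T x

lemma noisePoly_univ_coeff (p ρ : ℝ) (f : (Fin n → Bool) → ℝ) :
    noisePoly p ρ univ (coeff p f) = noise p ρ f := by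
  funext x
  rw [noisePoly, powerset_univ, noise]

lemma noisePoly_update {ρ : ℝ} {i : Fin n} {U : Finset (Fin n)} (hi : i ∉ U)
    (c : Finset (Fin n) → ℝ) (x : Fin n → Bool) (b : Bool) :
    noisePoly p ρ U c (Function.update x i b) = noisePoly p ρ U c x :=
  sum_congr rfl fun _ hT => by rw [chi_update fun h => hi (mem_powerset.1 hT h)]

lemma noisePoly_insert {ρ : ℝ} {i : Fin n} {U : Finset (Fin n)} (hi : i ∉ U)
    (c : Finset (Fin n) → ℝ) (x : Fin n → Bool) :
    noisePoly p ρ (insert i U) c x = noisePoly p ρ U c x +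
      chiOne p (x i) * (ρ * noisePoly p ρ U (fun T => c (insert i T)) x) := by
  rw [noisePoly, sum_powerset_insert hi, noisePoly, noisePoly, mul_sum, mul_sum]
  congr 1
  refine sum_congr rfl fun T hT => ?_
  have hiT : i ∉ T := fun h => hi (mem_powerset.1 hT h)
  rw [chi_insert hiT, card_insert_of_notMem hiT]
  ring

lemma Ep_noisePoly_insert_le (hp0 : 0 < p) (hp1 : p < 1) {i : Fin n} {U : Finset (Fin n)}
    (hi : i ∉ U) (c d : Finset (Fin n) → ℝ) :
    (Ep p fun x => noisePoly p (1 / 2) (insert i U) c x ^ 2 *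
        noisePoly p (1 / 2) (insert i U) d x ^ 2) ≤
      (Ep p fun x => noisePoly p (1 / 2) U c x ^ 2 * noisePoly p (1 / 2) U d x ^ 2) +
      (Ep p fun x => noisePoly p (1 / 2) U c x ^ 2 *
        noisePoly p (1 / 2) U (fun T => d (insert i T)) x ^ 2) +
      (Ep p fun x => noisePoly p (1 / 2) U (fun T => c (insert i T)) x ^ 2 *
        noisePoly p (1 / 2) U d x ^ 2) +
      3 / 16 / (p * (1 - p)) * (Ep p fun x =>
        noisePoly p (1 / 2) U (fun T => c (insert i T)) x ^ 2 *
          noisePoly p (1 / 2) U (fun T => d (insert i T)) x ^ 2) := by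
  have hσ : 0 < p * (1 - p) := mul_pos hp0 (sub_pos.2 hp1)
  have hskew : ((1 - 2 * p) / √(p * (1 - p))) ^ 2 + 4 = 1 / (p * (1 - p)) := by
    have h1p : 1 - p ≠ 0 := (sub_pos.2 hp1).ne'
    rw [div_pow, Real.sq_sqrt hσ.le]
    field_simp
    ring
  have htwo := two_point_le (chiOne_mean p) (chiOne_second_moment hp0 hp1)
    (chiOne_third_moment hp0 hp1) ((chiOne_fourth_moment hp0 hp1).trans (by linarith))
  rw [hskew] at htwo
  rw [Ep_eq_Ep_resample i, ← Ep_const_mul, ← Ep_add, ← Ep_add, ← Ep_add]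
  refine Ep_mono hp0.le hp1.le fun x => ?_
  simp only [noisePoly_insert hi, noisePoly_update hi, Function.update_self]
  refine (htwo _ _ _ _).trans_eq ?_
  ring

/-- The form `∑_{S ⊆ U} K^{|S|} (∑_{S ⊆ T ⊆ U} c(T)²) (∑_{S ⊆ T ⊆ U} d(T)²)`. For `U` everything,
`c = d = f̂` and `K = κ / σ²` it equals `∑_S (κ σ²)^{|S|} I_S(f)²`. -/
noncomputable def influenceForm (K : ℝ) (U : Finset (Fin n)) (c d : Finset (Fin n) → ℝ) : ℝ :=
  ∑ S ∈ U.powerset, K ^ #S * ((∑ T ∈ Icc S U, c T ^ 2) * ∑ T ∈ Icc S U, d T ^ 2)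

lemma influenceForm_nonneg {K : ℝ} (hK : 0 ≤ K) (U : Finset (Fin n))
    (c d : Finset (Fin n) → ℝ) : 0 ≤ influenceForm K U c d := by
  unfold influenceForm
  positivity

lemma influenceForm_insert (K : ℝ) {i : Fin n} {U : Finset (Fin n)} (hi : i ∉ U)
    (c d : Finset (Fin n) → ℝ) :
    influenceForm K (insert i U) c d = influenceForm K U c d +
      influenceForm K U c (fun T => d (insert i T)) +
      influenceForm K U (fun T => c (insert i T)) d +
      (1 + K) * influenceForm K U (fun T => c (insert i T)) (fun T => d (insert i T)) := by
  simp only [influenceForm]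
  rw [sum_powerset_insert hi, mul_sum]
  simp only [← sum_add_distrib]
  refine sum_congr rfl fun S hS => ?_
  have hiS : i ∉ S := fun h => hi (mem_powerset.1 hS h)
  simp only [sum_Icc_insert_right hi hiS, sum_Icc_insert_insert hi hiS,
    card_insert_of_notMem hiS, pow_succ]
  ring

lemma Ep_noisePoly_sq_mul_sq_le (hp0 : 0 < p) (hp1 : p < 1) (U : Finset (Fin n))
    (c d : Finset (Fin n) → ℝ) :
    (Ep p fun x => noisePoly p (1 / 2) U c x ^ 2 * noisePoly p (1 / 2) U d x ^ 2) ≤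
      influenceForm (3 / 16 / (p * (1 - p))) U c d := by
  have hK : 0 ≤ 3 / 16 / (p * (1 - p)) := by
    have := mul_pos hp0 (sub_pos.2 hp1)
    positivity
  induction U using Finset.induction_on generalizing c d with
  | empty => simp [noisePoly, influenceForm, chi, Ep_const]
  | insert i U hi ih =>
    have hcd := mul_le_mul_of_nonneg_left
      (ih (fun T => c (insert i T)) fun T => d (insert i T)) hK
    have hnonneg := influenceForm_nonneg hK U (fun T => c (insert i T)) fun T => d (insert i T)
    rw [influenceForm_insert _ hi]
    linarith [Ep_noisePoly_insert_le hp0 hp1 hi c d, ih c d, ih c fun T => d (insert i T),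
      ih (fun T => c (insert i T)) d]

lemma influenceForm_univ_coeff (hp0 : 0 < p) (hp1 : p < 1) (κ : ℝ) (f : (Fin n → Bool) → ℝ) :
    influenceForm (κ / (p * (1 - p))) univ (coeff p f) (coeff p f) =
      ∑ S, (κ * (p * (1 - p))) ^ #S * genInf p S f ^ 2 := by
  have hσ : p * (1 - p) ≠ 0 := (mul_pos hp0 (sub_pos.2 hp1)).ne'
  rw [influenceForm, powerset_univ]
  refine sum_congr rfl fun S _ => ?_
  rw [genInf_eq]
  generalize p * (1 - p) = s at hσ ⊢
  rw [div_pow κ, mul_pow κ]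
  field_simp

theorem Ep_noise_half_pow_four_le (hp0 : 0 < p) (hp1 : p < 1) (f : (Fin n → Bool) → ℝ) :
    (Ep p fun x => noise p (1 / 2) f x ^ 4) ≤
      ∑ S, (3 / 16 * (p * (1 - p))) ^ #S * genInf p S f ^ 2 := by
  rw [← influenceForm_univ_coeff hp0 hp1, ← noisePoly_univ_coeff]
  simpa only [← pow_add] using Ep_noisePoly_sq_mul_sq_le hp0 hp1 univ (coeff p f) (coeff p f)

lemma genInf_noise_two_trunc_sq_le (hp0 : 0 < p) (hp1 : p < 1) {d : ℕ} {γ : ℝ}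
    {f : (Fin n → Bool) → ℝ} (hγ : ∀ S : Finset (Fin n), #S ≤ d → genInf p S f ≤ γ)
    (S : Finset (Fin n)) :
    genInf p S (noise p 2 (trunc p d f)) ^ 2 ≤ 16 ^ d * γ * genInf p S (trunc p d f) := by
  have hnoise := genInf_noise_trunc_le hp0 hp1 (ρ := 2) (by norm_num) d S f
  have htrunc : genInf p S (trunc p d f) ^ 2 ≤ γ * genInf p S (trunc p d f) := by
    rcases le_or_gt #S d with hS | hS
    · rw [pow_two]
      exact mul_le_mul_of_nonneg_right ((genInf_trunc_le hp0 hp1 d S f).trans (hγ S hS))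
        (genInf_nonneg hp0.le hp1.le _ _)
    · simp [genInf_trunc_of_lt hp0 hp1 hS]
  calc genInf p S (noise p 2 (trunc p d f)) ^ 2
      ≤ ((2 ^ 2) ^ d * genInf p S (trunc p d f)) ^ 2 :=
        pow_le_pow_left₀ (genInf_nonneg hp0.le hp1.le _ _) hnoise 2
    _ = 16 ^ d * genInf p S (trunc p d f) ^ 2 := by
        rw [mul_pow, pow_right_comm]
        norm_num
    _ ≤ 16 ^ d * (γ * genInf p S (trunc p d f)) := by gcongr
    _ = _ := by ring

theorem Ep_trunc_pow_four_le (hp0 : 0 < p) (hp1 : p < 1) {d : ℕ} {γ : ℝ}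
    {f : (Fin n → Bool) → ℝ} (hγ : ∀ S : Finset (Fin n), #S ≤ d → genInf p S f ≤ γ) :
    (Ep p fun x => trunc p d f x ^ 4) ≤ 19 ^ d * γ * Ep p fun x => trunc p d f x ^ 2 := by
  have hγ0 : 0 ≤ γ := (genInf_nonneg hp0.le hp1.le ∅ f).trans (hγ ∅ (by simp))
  have : 0 ≤ 1 - p := sub_nonneg.2 hp1.le
  have hinv : noise p (1 / 2) (noise p 2 (trunc p d f)) = trunc p d f := by
    simpa only [one_div] using noise_inv_noise_trunc hp0 hp1 two_ne_zero d f
  calc (Ep p fun x => trunc p d f x ^ 4)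
      ≤ ∑ S, (3 / 16 * (p * (1 - p))) ^ #S * genInf p S (noise p 2 (trunc p d f)) ^ 2 := by
        simpa only [hinv] using Ep_noise_half_pow_four_le hp0 hp1 (noise p 2 (trunc p d f))
    _ ≤ ∑ S, (3 / 16 * (p * (1 - p))) ^ #S * (16 ^ d * γ * genInf p S (trunc p d f)) := by
        gcongr with S
        exact genInf_noise_two_trunc_sq_le hp0 hp1 hγ S
    _ = 16 ^ d * γ * ∑ T, (3 / 16 + 1) ^ #T * coeff p (trunc p d f) T ^ 2 := by
        rw [← sum_pow_card_mul_genInf hp0 hp1, mul_sum]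
        simp only [mul_left_comm]
    _ ≤ 16 ^ d * γ * ∑ T, (3 / 16 + 1) ^ d * coeff p (trunc p d f) T ^ 2 := by
        gcongr 16 ^ d * γ * ∑ T, ?_ with T
        exact pow_card_mul_coeff_trunc_sq_le hp0 hp1 (by norm_num) d f T
    _ = 19 ^ d * γ * ∑ T, coeff p (trunc p d f) T ^ 2 := by
        rw [← mul_sum, ← mul_assoc, mul_right_comm (16 ^ d), ← mul_pow]
        norm_num
    _ ≤ 19 ^ d * γ * Ep p fun x => trunc p d f x ^ 2 := by
        gcongr
        exact sum_coeff_sq_le hp0 hp1 _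

end Hypercontractivity

section Restriction

variable {p : ℝ}

/-- The discrete derivative `f_{i→1} - f_{i→0}`. -/
def discreteDeriv (i : Fin n) (f : (Fin n → Bool) → ℝ) (x : Fin n → Bool) : ℝ :=
  f (Function.update x i true) - f (Function.update x i false)

lemma coeff_insert (hp0 : 0 < p) (hp1 : p < 1) {i : Fin n} {T : Finset (Fin n)} (hi : i ∉ T)
    (f : (Fin n → Bool) → ℝ) :
    coeff p f (insert i T) = √(p * (1 - p)) * coeff p (discreteDeriv i f) T := by
  have hσ : 0 < p * (1 - p) := mul_pos hp0 (sub_pos.2 hp1)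
  have hsqrt0 : √(p * (1 - p)) ≠ 0 := (Real.sqrt_pos.2 hσ).ne'
  have htrue : p * chiOne p true = √(p * (1 - p)) := by
    rw [chiOne, if_pos rfl, mul_div_assoc', div_eq_iff hsqrt0, Real.mul_self_sqrt hσ.le]
  have hfalse : (1 - p) * chiOne p false = -√(p * (1 - p)) := by
    linear_combination chiOne_mean p - htrue
  rw [coeff, Ep_eq_Ep_resample i, coeff, ← Ep_const_mul]
  refine congrArg (Ep p) (funext fun x => ?_)
  simp only [chi_insert hi, chi_update hi, Function.update_self, discreteDeriv]
  linear_combination f (Function.update x i true) * chi p T x * htrue +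
    f (Function.update x i false) * chi p T x * hfalse

lemma genInf_insert_le (hp0 : 0 < p) (hp1 : p < 1) {i : Fin n} {S : Finset (Fin n)} (hi : i ∉ S)
    (f : (Fin n → Bool) → ℝ) : genInf p (insert i S) f ≤ genInf p S (discreteDeriv i f) := by
  have hσ : 0 < p * (1 - p) := mul_pos hp0 (sub_pos.2 hp1)
  have hsum : ∑ T ∈ Icc (insert i S) univ, coeff p f T ^ 2 =
      p * (1 - p) * ∑ T ∈ Icc S (univ.erase i), coeff p (discreteDeriv i f) T ^ 2 := by
    rw [← insert_erase (mem_univ i), sum_Icc_insert_insert (notMem_erase i univ) hi,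
      insert_erase (mem_univ i), mul_sum]
    refine sum_congr rfl fun T hT => ?_
    have hiT : i ∉ T := fun h => notMem_erase i univ ((mem_Icc.1 hT).2 h)
    rw [coeff_insert hp0 hp1 hiT, mul_pow, Real.sq_sqrt hσ.le]
  rw [genInf_eq, genInf_eq, hsum, card_insert_of_notMem hi, pow_succ',
    mul_div_mul_left _ _ hσ.ne']
  gcongr
  exact subset_univ _

lemma restrict1_empty (f : (Fin n → Bool) → ℝ) : restrict1 ∅ f = f := by
  funext x
  simp [restrict1]

lemma restrict1_update_true (i : Fin n) (J : Finset (Fin n)) (f : (Fin n → Bool) → ℝ)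
    (x : Fin n → Bool) :
    restrict1 J f (Function.update x i true) = restrict1 (insert i J) f x := by
  unfold restrict1
  congr! 2 with j
  by_cases hj : j = i <;> simp [hj]

lemma restrict1_discreteDeriv {i : Fin n} {J : Finset (Fin n)} (hi : i ∉ J)
    (f : (Fin n → Bool) → ℝ) :
    restrict1 J (discreteDeriv i f) = discreteDeriv i (restrict1 J f) := by
  have hcomm (x : Fin n → Bool) (b : Bool) :
      Function.update (fun j => if j ∈ J then true else x j) i b =
        fun j => if j ∈ J then true else Function.update x i b j := by
    funext j
    by_cases hj : j = i <;> simp [hj, hi]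
  funext x
  simp only [restrict1, discreteDeriv]
  rw [hcomm, hcomm]

lemma Ep_discreteDeriv_sq_le (hp0 : 0 ≤ p) (hp1 : p < 1) (i : Fin n) (f : (Fin n → Bool) → ℝ) :
    (Ep p fun x => discreteDeriv i f x ^ 2) ≤
      2 * (Ep p fun x => f (Function.update x i true) ^ 2) +
        2 / (1 - p) * Ep p fun x => f x ^ 2 := by
  have h1p : 0 < 1 - p := sub_pos.2 hp1
  rw [Ep_eq_Ep_resample i fun x => f x ^ 2, ← Ep_const_mul, ← Ep_const_mul, ← Ep_add]
  refine Ep_mono hp0 hp1.le fun x => ?_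
  unfold discreteDeriv
  generalize f (Function.update x i true) = a
  generalize f (Function.update x i false) = b
  have hresample : 2 * b ^ 2 ≤ 2 / (1 - p) * (p * a ^ 2 + (1 - p) * b ^ 2) := by
    rw [mul_add, ← mul_assoc _ (1 - p), div_mul_cancel₀ _ h1p.ne']
    exact le_add_of_nonneg_left (by positivity)
  linarith [sq_nonneg (a + b), add_sq a b, sub_sq a b]

theorem genInf_le_of_restrict1_le (hp0 : 0 < p) (hp1 : p < 1) {a M : ℝ} {S : Finset (Fin n)}
    {f : (Fin n → Bool) → ℝ}
    (hM : ∀ J ⊆ S, (Ep p fun x => restrict1 J f x ^ 2) ≤ a ^ #J * M) :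
    genInf p S f ≤ (2 * a + 2 / (1 - p)) ^ #S * M := by
  have : 0 < 1 - p := sub_pos.2 hp1
  induction S using Finset.induction_on generalizing f M with
  | empty =>
    have h := hM ∅ subset_rfl
    simp only [restrict1_empty, card_empty, pow_zero, one_mul] at h
    simpa [genInf] using (sum_coeff_sq_le hp0 hp1 f).trans h
  | insert i S hi ih =>
    rw [card_insert_of_notMem hi, pow_succ, mul_assoc]
    refine (genInf_insert_le hp0 hp1 hi f).trans (ih fun J hJ => ?_)
    have hiJ : i ∉ J := fun h => hi (hJ h)
    calc (Ep p fun x => restrict1 J (discreteDeriv i f) x ^ 2)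
        ≤ 2 * (Ep p fun x => restrict1 (insert i J) f x ^ 2) +
            2 / (1 - p) * Ep p fun x => restrict1 J f x ^ 2 := by
          simpa only [restrict1_discreteDeriv hiJ, restrict1_update_true] using
            Ep_discreteDeriv_sq_le hp0.le hp1 i (restrict1 J f)
      _ ≤ 2 * (a ^ #(insert i J) * M) + 2 / (1 - p) * (a ^ #J * M) := by
          gcongr
          · exact hM _ (insert_subset_insert i hJ)
          · exact hM _ (hJ.trans (subset_insert i S))
      _ = a ^ #J * ((2 * a + 2 / (1 - p)) * M) := by
          rw [card_insert_of_notMem hiJ]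
          ring

end Restriction

section NoiseSensitivity

variable {p : ℝ}

theorem Ep_trunc_sq_pow_three_le (hp0 : 0 < p) (hp1 : p < 1) {d : ℕ} {a M : ℝ} (ha : 0 ≤ a)
    {f : (Fin n → Bool) → ℝ} (hf : ∀ x, f x ∈ Set.Icc 0 1)
    (hM : ∀ J : Finset (Fin n), #J ≤ d → Ep p (restrict1 J f) ≤ a ^ #J * M) :
    (Ep p fun x => trunc p d f x ^ 2) ^ 3 ≤
      Ep p f ^ 3 * ((19 * (2 * a + 2 / (1 - p))) ^ d * M) := by
  set W := Ep p fun x => trunc p d f x ^ 2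
  have hμ : 0 ≤ Ep p f := Ep_nonneg hp0.le hp1.le fun x => (hf x).1
  have hM0 : 0 ≤ M := by
    have hempty := hM ∅ (by simp)
    rw [restrict1_empty, card_empty, pow_zero, one_mul] at hempty
    exact hμ.trans hempty
  have hbase : 1 ≤ 2 * a + 2 / (1 - p) := by
    have : 1 ≤ 2 / (1 - p) := by
      rw [le_div_iff₀ (sub_pos.2 hp1)]
      linarith
    linarith
  have hgenInf (S : Finset (Fin n)) (hS : #S ≤ d) :
      genInf p S f ≤ (2 * a + 2 / (1 - p)) ^ d * M := by
    refine (genInf_le_of_restrict1_le hp0 hp1 fun J hJ => ?_).trans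
      (mul_le_mul_of_nonneg_right (pow_le_pow_right₀ hbase hS) hM0)
    exact (Ep_sq_le_Ep hp0.le hp1.le fun x => hf _).trans (hM J ((card_le_card hJ).trans hS))
  have hfourth : W ^ 4 ≤ Ep p f ^ 3 * ((19 * (2 * a + 2 / (1 - p))) ^ d * M) * W := by
    calc W ^ 4 = (Ep p fun x => f x * trunc p d f x) ^ 4 := by rw [Ep_mul_trunc hp0 hp1]
      _ ≤ Ep p f ^ 3 * Ep p fun x => trunc p d f x ^ 4 :=
        Ep_mul_pow_four_le hp0.le hp1.le hf _
      _ ≤ Ep p f ^ 3 * (19 ^ d * ((2 * a + 2 / (1 - p)) ^ d * M) * W) := by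
        gcongr
        exact Ep_trunc_pow_four_le hp0 hp1 hgenInf
      _ = _ := by
        rw [mul_pow]
        ring
  have hW0 : 0 ≤ W := Ep_nonneg hp0.le hp1.le fun x => sq_nonneg _
  rcases hW0.eq_or_lt with hW | hW
  · rw [← hW, zero_pow three_ne_zero]
    positivity
  · exact le_of_mul_le_mul_right (by rwa [← pow_succ]) hW

lemma stab_le_sum_coeff_sq {ρ : ℝ} (hρ0 : 0 ≤ ρ) (hρ1 : ρ ≤ 1) (f : (Fin n → Bool) → ℝ) :
    stab p ρ f ≤ ∑ S, coeff p f S ^ 2 :=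
  sum_le_sum fun _ _ => mul_le_of_le_one_left (sq_nonneg _) (pow_le_one₀ hρ0 hρ1)

lemma stab_le_low_add_high {ρ : ℝ} (hρ0 : 0 < ρ) (hρ1 : ρ ≤ 1) (r : ℝ)
    (f : (Fin n → Bool) → ℝ) :
    stab p ρ f ≤ ∑ S : Finset (Fin n) with #S ≤ ⌊r⌋₊, coeff p f S ^ 2 +
      ρ ^ r * ∑ S, coeff p f S ^ 2 := by
  rw [stab, sum_filter, mul_sum, ← sum_add_distrib]
  refine sum_le_sum fun S _ => ?_
  split_ifs with hS
  · have hlow := mul_le_of_le_one_left (sq_nonneg (coeff p f S))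
      (pow_le_one₀ (n := #S) hρ0.le hρ1)
    exact hlow.trans (le_add_of_nonneg_right (by positivity))
  · rw [zero_add, ← Real.rpow_natCast]
    exact mul_le_mul_of_nonneg_right (Real.rpow_le_rpow_of_exponent_ge hρ0 hρ1
      (Nat.lt_of_floor_lt (not_le.1 hS)).le) (sq_nonneg _)

lemma Ep_restrict1_le_of_isGlobal (hp0 : 0 ≤ p) (hp1 : p ≤ 1) {r δ : ℝ} (hr : 0 ≤ r)
    {f : (Fin n → Bool) → ℝ} (hf : ∀ x, 0 ≤ f x) (hglob : IsGlobal p r δ f)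
    (hmeas : Ep p f ≤ δ) {J : Finset (Fin n)} (hJ : #J ≤ ⌊r⌋₊) :
    Ep p (restrict1 J f) ≤ 2 ^ #J * δ := by
  have hδ : 0 ≤ δ := (Ep_nonneg hp0 hp1 hf).trans hmeas
  rcases J.eq_empty_or_nonempty with rfl | hne
  · simpa [restrict1_empty] using hmeas
  · have htwo : (2 : ℝ) ≤ 2 ^ #J := le_self_pow₀ one_le_two (card_pos.2 hne).ne'
    calc Ep p (restrict1 J f) ≤ Ep p f + δ := hglob J ((Nat.le_floor_iff hr).1 hJ)
      _ ≤ 2 * δ := by linarith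
      _ ≤ 2 ^ #J * δ := by gcongr

lemma pow_floor_mul_le_of_le_rpow_neg_mul {b C r δ y : ℝ} (hb : 1 ≤ b) (hC : b ≤ C) (hr : 0 ≤ r)
    (hδ0 : 0 ≤ δ) (hδ : δ ≤ C ^ (-r) * y) : b ^ ⌊r⌋₊ * δ ≤ y := by
  have hC1 : 1 ≤ C := hb.trans hC
  have hCpos : 0 < C := one_pos.trans_le hC1
  calc b ^ ⌊r⌋₊ * δ ≤ C ^ r * δ := by
        gcongr
        calc b ^ ⌊r⌋₊ ≤ C ^ ⌊r⌋₊ := by gcongr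
          _ = C ^ (⌊r⌋₊ : ℝ) := (Real.rpow_natCast _ _).symm
          _ ≤ C ^ r := Real.rpow_le_rpow_of_exponent_le hC1 (Nat.floor_le hr)
    _ ≤ C ^ r * (C ^ (-r) * y) := by gcongr
    _ = y := by rw [← mul_assoc, ← Real.rpow_add hCpos, add_neg_cancel, Real.rpow_zero, one_mul]

lemma rpow_log_div_log_one_div {ρ y : ℝ} (hρ0 : 0 < ρ) (hρ1 : ρ < 1) (hy : 0 < y) :
    ρ ^ (Real.log y / Real.log (1 / ρ)) = y⁻¹ := by
  have hlog : (1 / ρ) ^ (Real.log y / Real.log (1 / ρ)) = y :=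
    Real.rpow_logb (by positivity) (one_lt_one_div hρ0 hρ1).ne' hy
  rw [one_div, Real.inv_rpow hρ0.le] at hlog
  rw [one_div, ← hlog, inv_inv, hlog]

lemma ten_rpow_mul_pow_three_le (r : ℝ) {ε : ℝ} (hε : 0 ≤ ε) :
    (10 : ℝ) ^ (-(3 * r) - 1) * ε ^ 3 ≤ 1000 ^ (-r) * (ε / 2) ^ 3 := by
  have hbase : (10 : ℝ) ^ (-(3 * r) - 1) = 1000 ^ (-r) / 10 := by
    rw [Real.rpow_sub_one (by norm_num), neg_mul_eq_mul_neg, Real.rpow_mul (by norm_num)]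
    norm_num
  rw [hbase, div_mul_eq_mul_div, mul_div_assoc]
  gcongr
  linarith [pow_nonneg hε 3, div_pow ε 2 3]

lemma four_add_two_div_one_sub_le (hp : p ≤ 1 / 2) : 4 + 2 / (1 - p) ≤ 8 := by
  have : 2 / (1 - p) ≤ 4 := by
    rw [div_le_iff₀ (by linarith)]
    linarith
  linarith

lemma sum_low_coeff_sq_le (hp0 : 0 < p) (hp1 : p < 1) {r δ C ε : ℝ} (hε : 0 ≤ ε) (hr : 0 ≤ r)
    (hC : 19 * (4 + 2 / (1 - p)) ≤ C) (hδ : δ ≤ C ^ (-r) * ε ^ 3) {f : (Fin n → Bool) → ℝ}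
    (hf : ∀ x, f x ∈ Set.Icc 0 1) (hglob : IsGlobal p r δ f) (hmeas : Ep p f ≤ δ) :
    ∑ S : Finset (Fin n) with #S ≤ ⌊r⌋₊, coeff p f S ^ 2 ≤ ε * Ep p f := by
  have hμ : 0 ≤ Ep p f := Ep_nonneg hp0.le hp1.le fun x => (hf x).1
  have hbase : 1 ≤ 19 * (4 + 2 / (1 - p)) := by
    have : 0 < 2 / (1 - p) := div_pos two_pos (sub_pos.2 hp1)
    linarith
  have hconst := pow_floor_mul_le_of_le_rpow_neg_mul hbase hC hr (hμ.trans hmeas) hδ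
  have hlevel := Ep_trunc_sq_pow_three_le hp0 hp1 zero_le_two hf fun J hJ =>
    Ep_restrict1_le_of_isGlobal hp0.le hp1.le hr (fun x => (hf x).1) hglob hmeas hJ
  rw [Ep_trunc_sq hp0 hp1, show (2 : ℝ) * 2 = 4 by norm_num] at hlevel
  refine le_of_pow_le_pow_left₀ three_ne_zero (by positivity) (hlevel.trans ?_)
  rw [mul_comm, mul_pow ε]
  exact mul_le_mul_of_nonneg_right hconst (pow_nonneg hμ 3)

theorem statement15_general (p ρ ε r δ C : ℝ) (hp0 : 0 < p) (hp1 : p < 1)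
    (hρ0 : 0 < ρ) (hρ1 : ρ ≤ 1) (hr : ρ ^ r ≤ ε / 2)
    (hC : 19 * (4 + 2 / (1 - p)) ≤ C) (hδ : δ ≤ C ^ (-r) * (ε / 2) ^ 3)
    (f : (Fin n → Bool) → ℝ) (hf : ∀ x, f x ∈ Set.Icc 0 1)
    (hglob : IsGlobal p r δ f) (hmeas : Ep p f ≤ δ) :
    stab p ρ f ≤ ε * Ep p f := by
  have hμ : 0 ≤ Ep p f := Ep_nonneg hp0.le hp1.le fun x => (hf x).1
  have hbessel : ∑ S, coeff p f S ^ 2 ≤ Ep p f :=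
    (sum_coeff_sq_le hp0 hp1 f).trans (Ep_sq_le_Ep hp0.le hp1.le hf)
  rcases le_or_gt 1 ε with hε1 | hε1
  · exact (stab_le_sum_coeff_sq hρ0.le hρ1 f).trans
      (hbessel.trans (le_mul_of_one_le_left hμ hε1))
  have hr0 : 0 ≤ r := by
    by_contra! hneg
    linarith [Real.one_le_rpow_of_pos_of_le_one_of_nonpos hρ0 hρ1 hneg.le]
  have hε0 : 0 ≤ ε / 2 := (Real.rpow_nonneg hρ0.le r).trans hr
  have hlow := sum_low_coeff_sq_le hp0 hp1 hε0 hr0 hC hδ hf hglob hmeas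
  have hhigh : ρ ^ r * ∑ S, coeff p f S ^ 2 ≤ ε / 2 * Ep p f := by gcongr
  linarith [stab_le_low_add_high (p := p) hρ0 hρ1 r f]

end NoiseSensitivity

/-- sparse global Boolean functions are noise sensitive (Theorem 5.1). -/
theorem statement15 {n : ℕ} (p ρ ε r δ : ℝ) (hp : 0 < p) (hp' : p ≤ 1/2)
    (hρ : 0 < ρ) (hρ' : ρ < 1) (hε : 0 < ε)
    (hr : r = Real.log (2 / ε) / Real.log (1 / ρ))
    (hδ : δ = (10 : ℝ) ^ (-(3 * r) - 1) * ε ^ 3)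
    (f : (Fin n → Bool) → ℝ) (hbool : ∀ x, f x = 0 ∨ f x = 1)
    (hglob : IsGlobal p r δ f) (hmeas : Ep p f < δ) :
    stab p ρ f ≤ ε * Ep p f := by
  have hC : 19 * (4 + 2 / (1 - p)) ≤ 1000 := by linarith [four_add_two_div_one_sub_le hp']
  have hρr : ρ ^ r = ε / 2 := by
    rw [hr, rpow_log_div_log_one_div hρ hρ' (by positivity), inv_div]
  exact statement15_general p ρ ε r δ 1000 hp (by linarith) hρ hρ'.le hρr.le hC
    (hδ.trans_le (ten_rpow_mul_pow_three_le r hε.le)) f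
    (fun x => by rcases hbool x with h | h <;> simp [h]) hglob hmeas.le

end GlobalHC
end

section
/- Let q ≥ 1 be an integer, and let (Ω,ν) = ∏_{t=1}^n (Ω_t,ν_t) be a finite product of finite probability spaces, where every atom of ν_i has probability at least p_i ∈ (0,1/2); set σ_i = √(p_i(1−p_i)) and σ_T = ∏_{i∈T} σ_i for T ⊆ [n]. Let f_1,…,f_q ∈ L²(Ω,ν) and S_1,…,S_q ⊆ [n] be such that each f_i depends only on the coordinates in S_i. For 3 ≤ j ≤ q, let T_j be the set of coordinates that belong to exactly j of the sets S_1,…,S_q. Then |𝔼[∏_{i=1}^q f_i]| ≤ (∏_{i=1}^q ‖f_i‖₂)·∏_{j=3}^q σ_{T_j}^{2−j}. -/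
open Finset

/-!
Integrate one coordinate `t` at a time. On a single probability space whose atoms all have mass at
least `p`, a product of `d ≥ 2` functions is handled by Cauchy–Schwarz for two of them and by
`‖g‖_∞ ≤ p ^ (-1/2) * ‖g‖₂` for the remaining `d - 2`, while functions constant in `t` factor out.
So integrating out `t` costs `p ^ (-(d - 2) / 2)`, where `d` counts the functions that depend on
`t`, and replaces each function by its `L²` norm in the direction `t`, which depends on no new
coordinate. After all coordinates are integrated these iterated norms are the `L²` norms on the
product. The constant `p ^ (-1/2)` is at most `σ⁻¹ = (p * (1 - p)) ^ (-1/2)`.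
-/

/-- The `L²` norm of `g` with respect to the measure on `α` whose atom at `a` has mass `w a`. -/
noncomputable def weightedL2Norm {α : Type*} [Fintype α] (w g : α → ℝ) : ℝ :=
  √(∑ a, w a * g a ^ 2)

/-- The mass function of the product of the measures with mass functions `w t`. -/
def piWeight {T : Type*} [Fintype T] {Ω : T → Type*} (w : ∀ t, Ω t → ℝ) (x : ∀ t, Ω t) : ℝ :=
  ∏ t, w t (x t)

section SingleSpace

variable {α κ : Type*} [Fintype α] {w : α → ℝ} {p : ℝ}

lemma weightedL2Norm_nonneg (w g : α → ℝ) : 0 ≤ weightedL2Norm w g :=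
  Real.sqrt_nonneg _

lemma weightedL2Norm_sq (hw : ∀ a, 0 ≤ w a) (g : α → ℝ) :
    weightedL2Norm w g ^ 2 = ∑ a, w a * g a ^ 2 :=
  Real.sq_sqrt <| sum_nonneg fun a _ => mul_nonneg (hw a) (sq_nonneg _)

lemma weightedL2Norm_of_forall_eq (hsum : ∑ a, w a = 1) {g : α → ℝ} {c : ℝ} (hg : ∀ a, g a = c) :
    weightedL2Norm w g = |c| := by
  simp only [weightedL2Norm, hg, ← sum_mul, hsum, one_mul, Real.sqrt_sq_eq_abs]

lemma sum_mul_abs_mul_abs_le (hw : ∀ a, 0 ≤ w a) (g h : α → ℝ) :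
    ∑ a, w a * (|g a| * |h a|) ≤ weightedL2Norm w g * weightedL2Norm w h :=
  calc ∑ a, w a * (|g a| * |h a|)
      = ∑ a, (√(w a) * |g a|) * (√(w a) * |h a|) :=
        sum_congr rfl fun a _ => by rw [mul_mul_mul_comm, Real.mul_self_sqrt (hw a)]
    _ ≤ √(∑ a, (√(w a) * |g a|) ^ 2) * √(∑ a, (√(w a) * |h a|) ^ 2) :=
        Real.sum_mul_le_sqrt_mul_sqrt _ _ _
    _ = weightedL2Norm w g * weightedL2Norm w h := by
        simp only [weightedL2Norm, mul_pow, sq_abs, Real.sq_sqrt (hw _)]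

lemma abs_le_inv_sqrt_mul_weightedL2Norm (hp : 0 < p) (hatom : ∀ a, p ≤ w a) (g : α → ℝ) (a : α) :
    |g a| ≤ (√p)⁻¹ * weightedL2Norm w g := by
  have hw : ∀ b, 0 ≤ w b := fun b => hp.le.trans (hatom b)
  rw [le_inv_mul_iff₀ (Real.sqrt_pos.2 hp)]
  refine Real.le_sqrt_of_sq_le ?_
  calc (√p * |g a|) ^ 2 = p * g a ^ 2 := by rw [mul_pow, Real.sq_sqrt hp.le, sq_abs]
    _ ≤ w a * g a ^ 2 := by gcongr; exact hatom a
    _ ≤ ∑ b, w b * g b ^ 2 :=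
        single_le_sum (f := fun b => w b * g b ^ 2)
          (fun b _ => mul_nonneg (hw b) (sq_nonneg _)) (mem_univ a)

lemma sum_mul_abs_mul_abs_mul_prod_abs_le (hp : 0 < p) (hatom : ∀ a, p ≤ w a)
    (u v : α → ℝ) (R : Finset κ) (g : κ → α → ℝ) :
    ∑ a, w a * (|u a| * |v a| * ∏ i ∈ R, |g i a|) ≤
      (√p)⁻¹ ^ #R * (weightedL2Norm w u * weightedL2Norm w v *
        ∏ i ∈ R, weightedL2Norm w (g i)) := by
  have hw : ∀ a, 0 ≤ w a := fun a => hp.le.trans (hatom a)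
  have hR : ∀ a, ∏ i ∈ R, |g i a| ≤ (√p)⁻¹ ^ #R * ∏ i ∈ R, weightedL2Norm w (g i) := fun a => by
    rw [← prod_const, ← prod_mul_distrib]
    exact prod_le_prod (fun i _ => abs_nonneg _)
      fun i _ => abs_le_inv_sqrt_mul_weightedL2Norm hp hatom (g i) a
  have hR₀ : 0 ≤ (√p)⁻¹ ^ #R * ∏ i ∈ R, weightedL2Norm w (g i) :=
    mul_nonneg (by positivity) (prod_nonneg fun i _ => weightedL2Norm_nonneg w (g i))
  calc ∑ a, w a * (|u a| * |v a| * ∏ i ∈ R, |g i a|)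
      ≤ ∑ a, w a * (|u a| * |v a| * ((√p)⁻¹ ^ #R * ∏ i ∈ R, weightedL2Norm w (g i))) := by
        gcongr with a
        exacts [hw a, hR a]
    _ = (∑ a, w a * (|u a| * |v a|)) * ((√p)⁻¹ ^ #R * ∏ i ∈ R, weightedL2Norm w (g i)) := by
        simp only [sum_mul, mul_assoc]
    _ ≤ weightedL2Norm w u * weightedL2Norm w v *
          ((√p)⁻¹ ^ #R * ∏ i ∈ R, weightedL2Norm w (g i)) := by
        gcongr
        exact sum_mul_abs_mul_abs_le hw u v
    _ = _ := mul_left_comm _ _ _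

lemma sum_mul_prod_abs_le (hp : 0 < p) (hatom : ∀ a, p ≤ w a) (hsum : ∑ a, w a = 1)
    (J : Finset κ) (g : κ → α → ℝ) :
    ∑ a, w a * ∏ i ∈ J, |g i a| ≤ (√p)⁻¹ ^ (#J - 2) * ∏ i ∈ J, weightedL2Norm w (g i) := by
  classical
  have norm_one : weightedL2Norm w (fun _ => 1) = 1 := by
    simpa using weightedL2Norm_of_forall_eq hsum (g := fun _ => 1) fun _ => rfl
  have key := sum_mul_abs_mul_abs_mul_prod_abs_le (κ := κ) hp hatom
  rcases hJ : #J with _ | _ | d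
  · obtain rfl := card_eq_zero.1 hJ
    simp [hsum]
  · obtain ⟨i, rfl⟩ := card_eq_one.1 hJ
    simpa [norm_one] using key (g i) (fun _ => 1) ∅ g
  · obtain ⟨i, J', hi, rfl, hJ'⟩ := card_eq_succ.1 hJ
    obtain ⟨k, R, hk, rfl, rfl⟩ := card_eq_succ.1 hJ'
    simpa [prod_insert hi, prod_insert hk, mul_assoc] using key (g i) (g k) R g

lemma sum_mul_prod_abs_le_of_const_off [Fintype κ] (hp : 0 < p) (hatom : ∀ a, p ≤ w a)
    (hsum : ∑ a, w a = 1) (J : Finset κ) (g : κ → α → ℝ) (hJ : ∀ i ∉ J, ∀ a b, g i a = g i b) :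
    ∑ a, w a * ∏ i, |g i a| ≤ (√p)⁻¹ ^ (#J - 2) * ∏ i, weightedL2Norm w (g i) := by
  classical
  have hconst : ∀ a, ∏ i ∈ Jᶜ, |g i a| = ∏ i ∈ Jᶜ, weightedL2Norm w (g i) := fun a =>
    prod_congr rfl fun i hi =>
      (weightedL2Norm_of_forall_eq hsum fun b => hJ i (mem_compl.1 hi) b a).symm
  calc ∑ a, w a * ∏ i, |g i a|
      = (∑ a, w a * ∏ i ∈ J, |g i a|) * ∏ i ∈ Jᶜ, weightedL2Norm w (g i) := by
        simp only [sum_mul, ← prod_mul_prod_compl J, hconst, mul_assoc]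
    _ ≤ (√p)⁻¹ ^ (#J - 2) * (∏ i ∈ J, weightedL2Norm w (g i)) *
          ∏ i ∈ Jᶜ, weightedL2Norm w (g i) := by
        gcongr
        · exact prod_nonneg fun i _ => weightedL2Norm_nonneg w (g i)
        · exact sum_mul_prod_abs_le hp hatom hsum J g
    _ = (√p)⁻¹ ^ (#J - 2) * ∏ i, weightedL2Norm w (g i) := by
        rw [mul_assoc, prod_mul_prod_compl]

end SingleSpace

lemma piWeight_nonneg {T : Type*} [Fintype T] {Ω : T → Type*} {w : ∀ t, Ω t → ℝ}
    (hw : ∀ t a, 0 ≤ w t a) (x : ∀ t, Ω t) : 0 ≤ piWeight w x :=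
  prod_nonneg fun t _ => hw t (x t)

lemma sum_piWeight_mul_comp_equiv {T T' : Type*} [Fintype T] [Fintype T'] [DecidableEq T]
    [DecidableEq T'] (e : T ≃ T') {Ω : T' → Type*} [∀ t, Fintype (Ω t)] (w : ∀ t, Ω t → ℝ)
    (F : (∀ t, Ω t) → ℝ) :
    ∑ x : ∀ t, Ω (e t), piWeight (fun t => w (e t)) x * F (Equiv.piCongrLeft Ω e x) =
      ∑ x, piWeight w x * F x := by
  rw [← (Equiv.piCongrLeft Ω e).sum_comp]
  simp only [piWeight, ← e.prod_comp, Equiv.piCongrLeft_apply_apply]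

lemma weightedL2Norm_piWeight_comp_equiv {T T' : Type*} [Fintype T] [Fintype T'] [DecidableEq T]
    [DecidableEq T'] (e : T ≃ T') {Ω : T' → Type*} [∀ t, Fintype (Ω t)] (w : ∀ t, Ω t → ℝ)
    (F : (∀ t, Ω t) → ℝ) :
    weightedL2Norm (piWeight fun t => w (e t)) (fun x => F (Equiv.piCongrLeft Ω e x)) =
      weightedL2Norm (piWeight w) F :=
  congrArg Real.sqrt <| sum_piWeight_mul_comp_equiv e w fun x => F x ^ 2

lemma sum_piWeight_mul_option {T : Type*} [Fintype T] [DecidableEq T] [DecidableEq (Option T)]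
    {Ω : Option T → Type*} [∀ t, Fintype (Ω t)] (w : ∀ t, Ω t → ℝ) (F : (∀ t, Ω t) → ℝ) :
    ∑ x, piWeight w x * F x =
      ∑ y, piWeight (fun t => w (some t)) y *
        ∑ a, w none a * F (Equiv.piOptionEquivProd.symm (a, y)) := by
  rw [← Equiv.piOptionEquivProd.symm.sum_comp, Fintype.sum_prod_type_right]
  simp only [piWeight, Fintype.prod_option, Equiv.piOptionEquivProd, Equiv.coe_fn_symm_mk, mul_sum,
    mul_assoc, mul_left_comm]

lemma weightedL2Norm_piWeight_option {T : Type*} [Fintype T] [DecidableEq T]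
    [DecidableEq (Option T)] {Ω : Option T → Type*} [∀ t, Fintype (Ω t)] {w : ∀ t, Ω t → ℝ}
    (hw : ∀ a, 0 ≤ w none a) (F : (∀ t, Ω t) → ℝ) :
    weightedL2Norm (piWeight w) F =
      weightedL2Norm (piWeight fun t => w (some t)) fun y =>
        weightedL2Norm (w none) fun a => F (Equiv.piOptionEquivProd.symm (a, y)) := by
  conv_rhs => rw [weightedL2Norm]
  simp only [weightedL2Norm_sq hw]
  rw [weightedL2Norm, sum_piWeight_mul_option]

lemma dependsOn_weightedL2Norm_option {T : Type*} {Ω : Option T → Type*} [Fintype (Ω none)]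
    (w₀ : Ω none → ℝ) {f : (∀ t, Ω t) → ℝ} {S : Set (Option T)} (hf : DependsOn f S) :
    DependsOn (fun y => weightedL2Norm w₀ fun a => f (Equiv.piOptionEquivProd.symm (a, y)))
      (some ⁻¹' S) :=
  fun _ _ hyz => congrArg (weightedL2Norm w₀) <| funext fun _ => hf fun
    | none, _ => rfl
    | some t, ht => hyz t ht

lemma sum_piWeight_mul_prod_abs_option_le {T κ : Type*} [Fintype T] [DecidableEq T]
    [DecidableEq (Option T)] [Fintype κ] {Ω : Option T → Type*} [∀ t, Fintype (Ω t)]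
    {w : ∀ t, Ω t → ℝ} (hw : ∀ t a, 0 ≤ w (some t) a) {S : κ → Set (Option T)} {c : ℝ}
    (hbound : ∀ g : κ → Ω none → ℝ, (∀ i, none ∉ S i → ∀ a b, g i a = g i b) →
      ∑ a, w none a * ∏ i, |g i a| ≤ c * ∏ i, weightedL2Norm (w none) (g i))
    {f : κ → (∀ t, Ω t) → ℝ} (hdep : ∀ i, DependsOn (f i) (S i)) :
    ∑ x, piWeight w x * ∏ i, |f i x| ≤
      c * ∑ y, piWeight (fun t => w (some t)) y *
        ∏ i, weightedL2Norm (w none) fun a => f i (Equiv.piOptionEquivProd.symm (a, y)) := by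
  rw [sum_piWeight_mul_option, mul_sum]
  refine sum_le_sum fun y _ => ?_
  rw [mul_left_comm]
  refine mul_le_mul_of_nonneg_left (hbound _ fun i hi a b => hdep i ?_) (piWeight_nonneg hw y)
  rintro (_ | t) ht
  exacts [absurd ht hi, rfl]

theorem sum_piWeight_mul_prod_abs_le {T κ : Type*} [hT : Fintype T] [hT' : DecidableEq T]
    [Fintype κ] {Ω : T → Type*} [∀ t, Fintype (Ω t)] {w : ∀ t, Ω t → ℝ} (hw : ∀ t a, 0 ≤ w t a)
    {S : κ → Set T} {C : T → ℝ} (hC : ∀ t, 0 ≤ C t)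
    (hbound : ∀ t (g : κ → Ω t → ℝ), (∀ i, t ∉ S i → ∀ a b, g i a = g i b) →
      ∑ a, w t a * ∏ i, |g i a| ≤ C t * ∏ i, weightedL2Norm (w t) (g i))
    {f : κ → (∀ t, Ω t) → ℝ} (hdep : ∀ i, DependsOn (f i) (S i)) :
    ∑ x, piWeight w x * ∏ i, |f i x| ≤ (∏ t, C t) * ∏ i, weightedL2Norm (piWeight w) (f i) := by
  revert hT' Ω S C
  -- `@` stops the binders reverted above from being introduced again before the motive is inferred.
  refine @(Fintype.induction_empty_option ?of_equiv ?empty ?option T (h_fintype := hT))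
  case of_equiv =>
    intro T T' _ e ih _ Ω _ w hw S C hC hbound f hdep
    classical
    let _ : Fintype T := Fintype.ofEquiv T' e.symm
    have key := ih (fun t => hw (e t)) (S := fun i => e ⁻¹' S i) (fun t => hC (e t))
      (fun t => hbound (e t)) (f := fun i x => f i (Equiv.piCongrLeft Ω e x))
      fun i x y hxy => hdep i <| e.surjective.forall.2 fun t ht => by
        simpa only [Equiv.piCongrLeft_apply_apply] using hxy t ht
    simpa only [sum_piWeight_mul_comp_equiv e w (fun x => ∏ i, |f i x|),
      weightedL2Norm_piWeight_comp_equiv, e.prod_comp] using key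
  case empty =>
    intros
    simp [piWeight, weightedL2Norm, Real.sqrt_sq_eq_abs]
  case option =>
    intro T _ ih _ Ω _ w hw S C hC hbound f hdep
    classical
    have key := ih (fun t => hw (some t)) (fun t => hC (some t)) (fun t => hbound (some t))
      fun i => dependsOn_weightedL2Norm_option (w none) (hdep i)
    simp only [abs_of_nonneg (weightedL2Norm_nonneg _ _)] at key
    calc ∑ x, piWeight w x * ∏ i, |f i x|
        ≤ C none * ∑ y, piWeight (fun t => w (some t)) y *
            ∏ i, weightedL2Norm (w none) fun a => f i (Equiv.piOptionEquivProd.symm (a, y)) :=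
          sum_piWeight_mul_prod_abs_option_le (fun t => hw (some t)) (hbound none) hdep
      _ ≤ C none * ((∏ t, C (some t)) * ∏ i, weightedL2Norm (piWeight fun t => w (some t)) fun y =>
            weightedL2Norm (w none) fun a => f i (Equiv.piOptionEquivProd.symm (a, y))) :=
          mul_le_mul_of_nonneg_left key (hC none)
      _ = (∏ t, C t) * ∏ i, weightedL2Norm (piWeight w) (f i) := by
          simp only [Fintype.prod_option, weightedL2Norm_piWeight_option (hw none), mul_assoc]

lemma inv_sqrt_pow_le_sqrt_mul_one_sub_zpow {p : ℝ} (hp : 0 < p) (hp1 : p < 1) {j : ℕ}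
    (hj : 2 ≤ j) :
    (√p)⁻¹ ^ (j - 2) ≤ √(p * (1 - p)) ^ ((2 : ℤ) - (j : ℤ)) := by
  have : 0 < √(p * (1 - p)) := Real.sqrt_pos.2 (mul_pos hp (sub_pos.2 hp1))
  have h_le : √(p * (1 - p)) ≤ √p := Real.sqrt_le_sqrt (by nlinarith)
  calc (√p)⁻¹ ^ (j - 2) ≤ (√(p * (1 - p)))⁻¹ ^ (j - 2) := by gcongr
    _ = √(p * (1 - p)) ^ ((2 : ℤ) - (j : ℤ)) := by
        rw [inv_pow, ← zpow_natCast, ← zpow_neg, Nat.cast_sub hj, neg_sub, Nat.cast_ofNat]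

lemma prod_inv_sqrt_pow_le_prod_Icc {T : Type*} [Fintype T] {p : T → ℝ} (hp : ∀ t, 0 < p t)
    (hp1 : ∀ t, p t < 1) {d : T → ℕ} {q : ℕ} (hd : ∀ t, d t ≤ q) :
    ∏ t, (√(p t))⁻¹ ^ (d t - 2) ≤
      ∏ j ∈ Icc 3 q, ∏ t with d t = j, √(p t * (1 - p t)) ^ ((2 : ℤ) - (j : ℤ)) := by
  simp only [prod_filter]
  rw [prod_comm]
  refine prod_le_prod (fun t _ => by positivity) fun t _ => ?_
  rw [prod_ite_eq]
  split_ifs with h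
  · exact inv_sqrt_pow_le_sqrt_mul_one_sub_zpow (hp t) (hp1 t) (by grind)
  · have h_le : d t ≤ 2 := by grind
    rw [Nat.sub_eq_zero_of_le h_le, pow_zero]

/-- The subtraction in the exponent is truncated: a coordinate lying in at most two of the sets
contributes the factor `1`. -/
theorem statement18_general {T κ : Type*} [Fintype T] [DecidableEq T] [Fintype κ]
    {A : Type*} [NormedCommRing A] [NormOneClass A] [NormedSpace ℝ A]
    {Ω : T → Type*} [∀ t, Fintype (Ω t)] {w : ∀ t, Ω t → ℝ} {p : T → ℝ}
    (hp : ∀ t, 0 < p t) (hatom : ∀ t a, p t ≤ w t a) (hsum : ∀ t, ∑ a, w t a = 1)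
    {f : κ → (∀ t, Ω t) → A} {S : κ → Finset T} (hdep : ∀ i, DependsOn (f i) (S i)) :
    ‖∑ x, piWeight w x • ∏ i, f i x‖ ≤
      (∏ i, weightedL2Norm (piWeight w) fun x => ‖f i x‖) *
        ∏ t, (√(p t))⁻¹ ^ (#{i | t ∈ S i} - 2) := by
  have hw : ∀ t a, 0 ≤ w t a := fun t a => (hp t).le.trans (hatom t a)
  calc ‖∑ x, piWeight w x • ∏ i, f i x‖
      ≤ ∑ x, piWeight w x * ∏ i, |‖f i x‖| := by
        refine norm_sum_le_of_le _ fun x _ => ?_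
        rw [norm_smul, Real.norm_of_nonneg (piWeight_nonneg hw x)]
        simp only [abs_norm]
        gcongr
        · exact piWeight_nonneg hw x
        · exact norm_prod_le _ _
    _ ≤ (∏ t, (√(p t))⁻¹ ^ (#{i | t ∈ S i} - 2)) *
          ∏ i, weightedL2Norm (piWeight w) fun x => ‖f i x‖ :=
        sum_piWeight_mul_prod_abs_le hw (fun t => by positivity)
          (fun t g hg => sum_mul_prod_abs_le_of_const_off (hp t) (hatom t) (hsum t) _ g
            fun i hi => hg i (by simpa using hi))
          fun i x y hxy => congrArg norm (hdep i hxy)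
    _ = _ := mul_comm _ _

/-- the correlation bound for functions of disjointly-supported juntas in a
finite product probability space (Lemma 6.10). Expectations over the product space
`Ω = ∏ t, Ω t` with product weights `x ↦ ∏ t, w t (x t)` are written as finite sums. -/
theorem statement18 {n : ℕ} (q : ℕ) (hq : 1 ≤ q)
    (Ω : Fin n → Type*) [∀ t, Fintype (Ω t)]
    (w : ∀ t, Ω t → ℝ) (p : Fin n → ℝ)
    (hp : ∀ t, 0 < p t) (hp' : ∀ t, p t < 1/2)
    (hatom : ∀ t a, p t ≤ w t a) (hsum : ∀ t, ∑ a, w t a = 1)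
    (f : Fin q → (∀ t, Ω t) → ℝ) (S : Fin q → Finset (Fin n))
    (hdep : ∀ i (x y : ∀ t, Ω t), (∀ t ∈ S i, x t = y t) → f i x = f i y) :
    |∑ x : ∀ t, Ω t, (∏ t, w t (x t)) * ∏ i, f i x| ≤
      (∏ i, Real.sqrt (∑ x : ∀ t, Ω t, (∏ t, w t (x t)) * f i x ^ 2)) *
      ∏ j ∈ Finset.Icc 3 q,
        ∏ t ∈ Finset.univ.filter
            (fun t => (Finset.univ.filter (fun i => t ∈ S i)).card = j),
          Real.sqrt (p t * (1 - p t)) ^ ((2 : ℤ) - (j : ℤ)) := by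
  have key := statement18_general hp hatom hsum hdep
  simp only [Real.norm_eq_abs, weightedL2Norm, sq_abs] at key
  exact key.trans <| mul_le_mul_of_nonneg_left
    (prod_inv_sqrt_pow_le_prod_Icc hp (fun t => (hp' t).trans (by norm_num))
      fun t => card_finset_fin_le _)
    (prod_nonneg fun i _ => Real.sqrt_nonneg _)
end
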